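/- arXiv:0810.0183 — 2 statements merged into one kernel-verified Lean document; each statement's English description precedes it below -/
import Mathlib

section
/- There exists a natural number n such that, with f(z) = z² and g(z) = 1 − n²z⁴, the pair (f,g) is an invertible pair in the real disc algebra A_ℝ(D), f is positive at every real zero of g, g is positive at every real zero of f, and yet there exist no units u, v of A_ℝ(D) with uf + vg = 1. -/
open Complex Metric ComplexConjugate

/-- The real disc algebra `A_ℝ(D)`: functions continuous on the closed unit disc,
holomorphic on the open unit disc, satisfying `f z = conj (f (conj z))` on the closed disc. -/
def IsRDisc (f : ℂ → ℂ) : Prop :=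
  ContinuousOn f (closedBall (0 : ℂ) 1) ∧
  DifferentiableOn ℂ f (ball (0 : ℂ) 1) ∧
  ∀ z ∈ closedBall (0 : ℂ) 1, f z = conj (f (conj z))

/-- A unit of `A_ℝ(D)`: a member of the algebra with no zeros on the closed unit disc. -/
def IsRDiscUnit (f : ℂ → ℂ) : Prop :=
  IsRDisc f ∧ ∀ z ∈ closedBall (0 : ℂ) 1, f z ≠ 0

/-- The pair `(f, g)` is invertible in `A_ℝ(D)`: there are `α, β` in the algebra with
`α f + β g = 1` on the closed unit disc. -/
def BezoutPair (f g : ℂ → ℂ) : Prop :=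
  ∃ α β : ℂ → ℂ, IsRDisc α ∧ IsRDisc β ∧
    ∀ z ∈ closedBall (0 : ℂ) 1, α z * f z + β z * g z = 1

/-- The pairs `(f₁,g₁)` and `(f₂,g₂)` are sign-linked. -/
def SignLinked (f₁ g₁ f₂ g₂ : ℂ → ℂ) : Prop :=
  ∀ x y : ℝ, x ∈ Set.Icc (-1 : ℝ) 1 → y ∈ Set.Icc (-1 : ℝ) 1 →
    f₁ (x : ℂ) * g₂ (x : ℂ) - f₂ (x : ℂ) * g₁ (x : ℂ) = 0 →
    f₁ (y : ℂ) * g₂ (y : ℂ) - f₂ (y : ℂ) * g₁ (y : ℂ) = 0 →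
    ∀ lam mu : ℝ,
      f₂ (x : ℂ) = (lam : ℂ) * f₁ (x : ℂ) → g₂ (x : ℂ) = (lam : ℂ) * g₁ (x : ℂ) →
      f₂ (y : ℂ) = (mu : ℂ) * f₁ (y : ℂ) → g₂ (y : ℂ) = (mu : ℂ) * g₁ (y : ℂ) →
      0 < lam * mu

/-- `f` has constant sign on the real zeros of `g`: the (real) values `f x` over
`x ∈ [-1,1]` with `g x = 0` are either all positive or all negative. -/
def ConstSignOnRealZeros (f g : ℂ → ℂ) : Prop :=
  (∀ x ∈ Set.Icc (-1 : ℝ) 1, g (x : ℂ) = 0 → 0 < (f (x : ℂ)).re) ∨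
  (∀ x ∈ Set.Icc (-1 : ℝ) 1, g (x : ℂ) = 0 → (f (x : ℂ)).re < 0)

/-!
Suppose `u z ^ j + v (1 - c z ^ k) = 1` with `u`, `v` zero-free, and put `H = u z ^ j`. On a circle
inside the disc on which `|c z ^ k| > 1`, the curve `H` winds `j` times around `0`, while
`1 - H = v (1 - c z ^ k)` winds `k ≠ j` times. As `1 - H` would wind `0` times if `|H| < 1` and `j`
times if `|H| > 1` on the whole circle, `|H| = 1` at some point of it.

Substitute `z = exp ζ` and write `H = exp F`. The function `F` omits `2πiℤ` wherever
`|c z ^ k| > 1`, which for large `c` includes a disc of large radius about a point `p` with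
`Re F(p) = 0`, and `F(p + 4πi) - F(p) = 4πij`. But a function omitting the integers is `cos ψ`,
where `ψ` omits a `4`-dense set, so `ψ'` is small at the centre of a large disc by Bloch's theorem.
Hence `F` varies by less than `4π` between `p` and `p + 4πi`, and `j = 0`.
-/

open Filter Topology
open scoped Real

/-! ### Holomorphic logarithms and inverse cosines -/

lemma differentiableAt_of_exp_eventuallyEq {f g : ℂ → ℂ} {z : ℂ} (hf : DifferentiableAt ℂ f z)
    (hg : ContinuousAt g z) (h : ∀ᶠ w in 𝓝 z, exp (g w) = f w) : DifferentiableAt ℂ g z := by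
  have hfz : f z ≠ 0 := h.self_of_nhds ▸ exp_ne_zero _
  have hnear : ∀ᶠ w in 𝓝 z, ‖g w - g z‖ < π := by
    simpa only [dist_eq_norm] using hg.eventually (ball_mem_nhds (g z) Real.pi_pos)
  have hlog : g =ᶠ[𝓝 z] fun w ↦ g z + log (f w / f z) := by
    filter_upwards [h, hnear] with w hw hgw
    have him := abs_lt.1 ((abs_im_le_norm _).trans_lt hgw)
    rw [← hw, ← h.self_of_nhds, ← exp_sub, log_exp him.1 him.2.le]
    ring
  exact (((hf.div_const _).clog (by simp [hfz])).const_add _).congr_of_eventuallyEq hlog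

lemma exists_differentiableOn_exp_eq {U : Set ℂ} (hUo : IsOpen U) (hUc : IsSimplyConnected U)
    {f : ℂ → ℂ} (hf : DifferentiableOn ℂ f U) (hf0 : ∀ z ∈ U, f z ≠ 0) :
    ∃ g : ℂ → ℂ, DifferentiableOn ℂ g U ∧ ∀ z ∈ U, exp (g z) = f z := by
  obtain ⟨g, hgc, hg⟩ := exists_continuousOn_eqOn_exp_comp hUc hUo hf.continuousOn
    (by rintro ⟨z, hz, hfz⟩; exact hf0 z hz hfz)
  refine ⟨g, fun z hz ↦ DifferentiableAt.differentiableWithinAt ?_, hg⟩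
  have hU : U ∈ 𝓝 z := hUo.mem_nhds hz
  exact differentiableAt_of_exp_eventuallyEq (hf.differentiableAt hU) (hgc.continuousAt hU)
    (hg.eventuallyEq_of_mem hU)

-- `S = √(C² - 1)` satisfies `(C + S)(C - S) = 1`, so `log (C + S) / i` is an inverse cosine of `C`.
lemma exists_differentiableOn_cos_eq {U : Set ℂ} (hUo : IsOpen U) (hUc : IsSimplyConnected U)
    {C : ℂ → ℂ} (hC : DifferentiableOn ℂ C U) (h1 : ∀ z ∈ U, C z ≠ 1) (hn1 : ∀ z ∈ U, C z ≠ -1) :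
    ∃ ψ : ℂ → ℂ, DifferentiableOn ℂ ψ U ∧ ∀ z ∈ U, cos (ψ z) = C z := by
  obtain ⟨g, hg, hge⟩ := exists_differentiableOn_exp_eq hUo hUc ((hC.pow 2).sub_const 1)
    fun z hz ↦ sub_ne_zero.2 fun h ↦ by simpa [h1 z hz, hn1 z hz] using sq_eq_one_iff.1 h
  let S : ℂ → ℂ := fun z ↦ exp (g z / 2)
  have hS : DifferentiableOn ℂ S U := (hg.div_const 2).cexp
  have hCS : ∀ z ∈ U, (C z + S z) * (C z - S z) = 1 := by
    intro z hz
    have hS2 : S z ^ 2 = C z ^ 2 - 1 := by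
      rw [← exp_nat_mul, Nat.cast_ofNat, mul_div_cancel₀ _ two_ne_zero, hge z hz, Pi.pow_apply]
    linear_combination -hS2
  obtain ⟨φ, hφ, hφe⟩ := exists_differentiableOn_exp_eq hUo hUc (hC.add hS)
    fun z hz ↦ left_ne_zero_of_mul_eq_one (hCS z hz)
  refine ⟨fun z ↦ -I * φ z, hφ.const_mul _, fun z hz ↦ ?_⟩
  have hpos : exp (φ z) = C z + S z := hφe z hz
  have hneg : exp (-φ z) = C z - S z := by
    rw [exp_neg, hpos, inv_eq_of_mul_eq_one_right (hCS z hz)]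
  have hI : -I * φ z * I = φ z := by linear_combination -φ z * I_mul_I
  rw [Complex.cos, neg_mul, hI, hpos, hneg]
  ring

lemma isSimplyConnected_ball {c : ℂ} {r : ℝ} (hr : 0 < r) : IsSimplyConnected (ball c r) :=
  have := contractibleSpace_ball (x := c) hr
  (inferInstance : SimplyConnectedSpace (ball c r))

/-! ### Bloch's theorem -/

-- Maximise `φ z * (R - dist z c)` over the ball.
lemma exists_ball_forall_le_two_mul {X : Type*} [PseudoMetricSpace X] [ProperSpace X]
    {φ : X → ℝ} {c : X} {R : ℝ} (hR : 0 ≤ R) (hφ : ContinuousOn φ (closedBall c R))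
    (hφ0 : ∀ z ∈ closedBall c R, 0 ≤ φ z) :
    ∃ a r, ball a r ⊆ ball c R ∧ φ c * R ≤ 2 * (φ a * r) ∧ ∀ z ∈ ball a r, φ z ≤ 2 * φ a := by
  obtain ⟨a, ha, hmax⟩ := (isCompact_closedBall c R).exists_isMaxOn
    ⟨c, mem_closedBall_self hR⟩ (hφ.mul (f := φ) (g := fun z ↦ R - dist z c) (by fun_prop))
  have hmax' : ∀ z ∈ closedBall c R, φ z * (R - dist z c) ≤ φ a * (R - dist a c) := hmax
  have hac : dist a c ≤ R := ha
  have hsub : ∀ z ∈ ball a ((R - dist a c) / 2), dist z c ≤ R - (R - dist a c) / 2 := by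
    intro z hz
    linarith [dist_triangle z a c, mem_ball.1 hz]
  have hr : ∀ z ∈ ball a ((R - dist a c) / 2), 0 < (R - dist a c) / 2 :=
    fun z hz ↦ pos_of_mem_ball hz
  refine ⟨a, (R - dist a c) / 2, fun z hz ↦ ?_, ?_, fun z hz ↦ ?_⟩
  · rw [mem_ball]
    linarith [hsub z hz, hr z hz]
  · have := hmax' c (mem_closedBall_self hR)
    rw [dist_self, sub_zero] at this
    linarith
  · have hzR : z ∈ closedBall c R := mem_closedBall.2 (by linarith [hsub z hz, hr z hz])
    refine le_of_mul_le_mul_right ?_ (hr z hz)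
    calc φ z * ((R - dist a c) / 2)
        ≤ φ z * (R - dist z c) :=
          mul_le_mul_of_nonneg_left (by linarith [hsub z hz]) (hφ0 z hzR)
      _ ≤ φ a * (R - dist a c) := hmax' z hzR
      _ = 2 * φ a * ((R - dist a c) / 2) := by ring

lemma norm_sub_sub_deriv_mul_le {F : ℂ → ℂ} {c : ℂ} {r K : ℝ}
    (hF : DifferentiableOn ℂ F (ball c r))
    (hK : ∀ z ∈ ball c r, ‖deriv F z‖ ≤ K * ‖deriv F c‖) {z : ℂ} (hz : z ∈ ball c r) :
    ‖F z - F c - deriv F c * (z - c)‖ ≤ (K + 1) * ‖deriv F c‖ / r * ‖z - c‖ ^ 2 := by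
  have hr : 0 < r := pos_of_mem_ball hz
  have hsub : closedBall c ‖z - c‖ ⊆ ball c r := closedBall_subset_ball (mem_ball_iff_norm.1 hz)
  have hschwarz : ∀ w ∈ ball c r,
      ‖deriv F w - deriv F c‖ ≤ (K + 1) * ‖deriv F c‖ / r * ‖w - c‖ := by
    intro w hw
    simpa only [dist_eq_norm] using dist_le_div_mul_dist_of_mapsTo_ball (hF.deriv isOpen_ball)
      (fun x hx ↦ mem_closedBall_iff_norm.2 <|
        (norm_sub_le _ _).trans (by linarith [hK x hx])) hw
  have hderiv : ∀ w ∈ closedBall c ‖z - c‖, HasDerivWithinAt (fun x ↦ F x - deriv F c * x)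
      (deriv F w - deriv F c) (closedBall c ‖z - c‖) w := by
    intro w hw
    have hFw := (hF.differentiableAt (isOpen_ball.mem_nhds (hsub hw))).hasDerivAt
    exact (hFw.fun_sub (hasDerivAt_const_mul (deriv F c))).hasDerivWithinAt
  have hbound : ∀ w ∈ closedBall c ‖z - c‖,
      ‖deriv F w - deriv F c‖ ≤ (K + 1) * ‖deriv F c‖ / r * ‖z - c‖ := by
    intro w hw
    have hK0 : 0 ≤ (K + 1) * ‖deriv F c‖ := by
      linarith [hK c (mem_ball_self hr), norm_nonneg (deriv F c)]
    refine (hschwarz w (hsub hw)).trans ?_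
    gcongr
    exact mem_closedBall_iff_norm.1 hw
  have := (convex_closedBall c ‖z - c‖).norm_image_sub_le_of_norm_hasDerivWithin_le hderiv hbound
    (mem_closedBall_self (norm_nonneg _)) (mem_closedBall_iff_norm.2 le_rfl)
  calc ‖F z - F c - deriv F c * (z - c)‖
      = ‖F z - deriv F c * z - (F c - deriv F c * c)‖ := by congr 1; ring
    _ ≤ _ := by rw [sq, ← mul_assoc]; exact this

lemma ball_subset_image_ball_of_norm_deriv_le {F : ℂ → ℂ} {c : ℂ} {r K : ℝ} (hr : 0 < r)
    (hF : DifferentiableOn ℂ F (ball c r))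
    (hK : ∀ z ∈ ball c r, ‖deriv F z‖ ≤ K * ‖deriv F c‖) :
    ball (F c) (‖deriv F c‖ * r / (8 * (K + 1))) ⊆ F '' ball c r := by
  rcases eq_or_ne (deriv F c) 0 with hd | hd
  · simp [hd]
  have hd0 : 0 < ‖deriv F c‖ := norm_pos_iff.2 hd
  have hK1 : 1 ≤ K := (le_mul_iff_one_le_left hd0).1 (hK c (mem_ball_self hr))
  -- On the sphere of radius `s` the linear term of `F` is twice the remainder.
  set s := r / (2 * (K + 1)) with hs
  have hs0 : 0 < s := by positivity
  have hsr : s < r := div_lt_self hr (by linarith)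
  have hsub : closedBall c s ⊆ ball c r := closedBall_subset_ball hsr
  have hlow : ∀ z ∈ sphere c s, ‖deriv F c‖ * s / 2 ≤ ‖F z - F c‖ := by
    intro z hz
    have hrem := norm_sub_sub_deriv_mul_le hF hK (hsub (sphere_subset_closedBall hz))
    have htri := norm_sub_norm_le (deriv F c * (z - c)) (F z - F c)
    rw [norm_sub_rev (deriv F c * (z - c)), norm_mul] at htri
    rw [mem_sphere_iff_norm.1 hz] at hrem htri
    have hconst : (K + 1) * ‖deriv F c‖ / r * s ^ 2 = ‖deriv F c‖ * s / 2 := by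
      rw [hs]
      field_simp
    linarith
  have hnonconst : ∃ᶠ z in 𝓝 c, F z ≠ F c := fun hev ↦ hd <| by
    have hev' : F =ᶠ[𝓝 c] fun _ ↦ F c := hev.mono fun z hz ↦ not_not.1 hz
    rw [hev'.deriv_eq, deriv_const]
  have hcl : DiffContOnCl ℂ F (ball c s) :=
    (hF.mono (closure_ball_subset_closedBall.trans hsub)).diffContOnCl
  have hradius : ‖deriv F c‖ * r / (8 * (K + 1)) = ‖deriv F c‖ * s / 2 / 2 := by
    rw [hs]
    field_simp
    norm_num
  rw [hradius]
  exact (hcl.ball_subset_image_closedBall hs0 hlow hnonconst).trans (Set.image_mono hsub)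

theorem exists_ball_subset_image_ball {F : ℂ → ℂ} {c : ℂ} {R : ℝ}
    (hF : DifferentiableOn ℂ F (ball c R)) :
    ∃ w, ball w (‖deriv F c‖ * R / 96) ⊆ F '' ball c R := by
  rcases le_or_gt (‖deriv F c‖ * R) 0 with hR | hR
  · exact ⟨0, by rw [ball_eq_empty.2 (by linarith)]; exact Set.empty_subset _⟩
  have hR0 : 0 < R := pos_of_mul_pos_right hR (norm_nonneg _)
  have hhalf : closedBall c (R / 2) ⊆ ball c R := closedBall_subset_ball (by linarith)
  obtain ⟨a, r, hsub, hrad, hdbl⟩ := exists_ball_forall_le_two_mul (half_pos hR0).le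
    ((hF.deriv isOpen_ball).continuousOn.mono hhalf).norm fun z _ ↦ norm_nonneg (deriv F z)
  have hsubR : ball a r ⊆ ball c R := hsub.trans (ball_subset_closedBall.trans hhalf)
  have hr : 0 < r := pos_of_mul_pos_right (by linarith) (norm_nonneg (deriv F a))
  refine ⟨F a, ?_⟩
  calc ball (F a) (‖deriv F c‖ * R / 96)
      ⊆ ball (F a) (‖deriv F a‖ * r / (8 * (2 + 1))) := ball_subset_ball (by linarith)
    _ ⊆ F '' ball a r := ball_subset_image_ball_of_norm_deriv_le hr (hF.mono hsubR) hdbl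
    _ ⊆ F '' ball c R := Set.image_mono hsubR

lemma norm_deriv_le_of_forall_exists_notMem_image {F : ℂ → ℂ} {c : ℂ} {R M : ℝ} (hR : 0 < R)
    (hF : DifferentiableOn ℂ F (ball c R)) (hM : ∀ w, ∃ w' ∈ ball w M, w' ∉ F '' ball c R) :
    ‖deriv F c‖ ≤ 96 * M / R := by
  by_contra! hlt
  obtain ⟨w, hw⟩ := exists_ball_subset_image_ball hF
  obtain ⟨w', hw'M, hw'F⟩ := hM w
  have hMR : M ≤ ‖deriv F c‖ * R / 96 := by
    rw [div_lt_iff₀ hR] at hlt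
    linarith
  exact hw'F (hw (ball_subset_ball hMR hw'M))

/-! ### Holomorphic functions omitting the integers -/

lemma exists_cosh_eq_intCast_of_nonneg {x : ℝ} (hx : 0 ≤ x) :
    ∃ t ∈ Set.Icc x (x + 2), ∃ k : ℤ, Real.cosh t = k := by
  have hcosh2 : 2 ≤ Real.cosh 2 := by
    have := Real.add_one_le_exp 2
    have := Real.cosh_sq 2
    have := Real.self_le_sinh_iff.2 zero_le_two
    nlinarith [Real.cosh_pos 2]
  have hstep : Real.cosh x + 1 ≤ Real.cosh (x + 2) := by
    rw [Real.cosh_add]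
    nlinarith [Real.one_le_cosh x, mul_nonneg (Real.sinh_nonneg_iff.2 hx)
      (Real.sinh_nonneg_iff.2 zero_le_two)]
  obtain ⟨t, ht, hte⟩ := intermediate_value_Icc (by linarith) Real.continuous_cosh.continuousOn
    (show (⌈Real.cosh x⌉ : ℝ) ∈ Set.Icc (Real.cosh x) (Real.cosh (x + 2)) from
      ⟨Int.le_ceil _, (Int.ceil_lt_add_one _).le.trans hstep⟩)
  exact ⟨t, ht, _, hte⟩

lemma exists_abs_sub_le_cosh_eq_intCast (x : ℝ) :
    ∃ t : ℝ, |t - x| ≤ 2 ∧ ∃ k : ℤ, Real.cosh t = k := by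
  rcases le_total 0 x with hx | hx
  · obtain ⟨t, ht, k, hk⟩ := exists_cosh_eq_intCast_of_nonneg hx
    exact ⟨t, abs_le.2 ⟨by linarith [ht.1], by linarith [ht.2]⟩, k, hk⟩
  · obtain ⟨t, ht, k, hk⟩ := exists_cosh_eq_intCast_of_nonneg (neg_nonneg.2 hx)
    exact ⟨-t, abs_le.2 ⟨by linarith [ht.2], by linarith [ht.1]⟩, k, by rw [Real.cosh_neg, hk]⟩

lemma exists_mem_ball_cos_eq_intCast (w : ℂ) : ∃ w' ∈ ball w 4, ∃ k : ℤ, cos w' = k := by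
  obtain ⟨t, ht, k, hk⟩ := exists_abs_sub_le_cosh_eq_intCast w.im
  set m : ℤ := round (w.re / π)
  have hm : |m * π - w.re| ≤ π / 2 := by
    calc |m * π - w.re| = |w.re / π - m| * π := by
          rw [abs_sub_comm, ← abs_of_pos Real.pi_pos, ← abs_mul, abs_of_pos Real.pi_pos, sub_mul,
            div_mul_cancel₀ _ Real.pi_ne_zero]
      _ ≤ 1 / 2 * π := by gcongr; exact abs_sub_round _
      _ = π / 2 := by ring
  refine ⟨t * I + m * π, ?_, m.negOnePow * k, ?_⟩
  · rw [mem_ball_iff_norm]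
    refine (norm_le_abs_re_add_abs_im _).trans_lt ?_
    have hre : (t * I + m * π - w).re = m * π - w.re := by simp
    have him : (t * I + m * π - w).im = t - w.im := by simp
    rw [hre, him]
    linarith [Real.pi_lt_four]
  · rw [Complex.cos_antiperiodic.add_int_mul_eq, cos_mul_I, ← ofReal_cosh, hk]
    push_cast
    rfl


lemma norm_cos_le_cosh_im (w : ℂ) : ‖cos w‖ ≤ Real.cosh w.im := by
  have hexp : ‖exp (w * I)‖ = Real.exp (-w.im) := by simp [norm_exp]
  have hexp' : ‖exp (-w * I)‖ = Real.exp w.im := by simp [norm_exp]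
  rw [Complex.cos, norm_div, Real.cosh_eq, norm_ofNat, ← hexp, ← hexp', add_comm ‖_‖]
  gcongr
  exact norm_add_le _ _

lemma im_eq_zero_of_cos_eq_ofReal {w : ℂ} {x : ℝ} (hx : |x| ≤ 1) (h : cos w = x) : w.im = 0 := by
  rw [← Real.cos_arccos (abs_le.1 hx).1 (abs_le.1 hx).2, ofReal_cos, eq_comm, cos_eq_cos_iff] at h
  rcases h with ⟨k, rfl | rfl⟩ <;> simp

theorem norm_le_cosh_of_forall_ne_intCast {f : ℂ → ℂ} {p q : ℂ} {R x : ℝ}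
    (hf : DifferentiableOn ℂ f (ball p R)) (hint : ∀ z ∈ ball p R, ∀ k : ℤ, f z ≠ k)
    (hx : |x| ≤ 1) (hp : f p = x) (hq : q ∈ ball p (R / 2)) :
    ‖f q‖ ≤ Real.cosh (768 * ‖q - p‖ / R) := by
  have hR : 0 < R := by linarith [pos_of_mem_ball hq]
  have hpq : p ∈ ball p (R / 2) := mem_ball_self (half_pos hR)
  have hhalf : ball p (R / 2) ⊆ ball p R := ball_subset_ball (by linarith)
  obtain ⟨ψ, hψ, hcos⟩ := exists_differentiableOn_cos_eq isOpen_ball (isSimplyConnected_ball hR) hf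
    (fun z hz ↦ by simpa using hint z hz 1) (fun z hz ↦ by simpa using hint z hz (-1))
  have hderiv : ∀ z ∈ ball p (R / 2), ‖deriv ψ z‖ ≤ 96 * 4 / (R / 2) := by
    intro z hz
    have hzR : ball z (R / 2) ⊆ ball p R := ball_subset_ball' (by linarith [mem_ball.1 hz])
    refine norm_deriv_le_of_forall_exists_notMem_image (half_pos hR) (hψ.mono hzR) fun w ↦ ?_
    obtain ⟨w', hw', k, hk⟩ := exists_mem_ball_cos_eq_intCast w
    refine ⟨w', hw', ?_⟩
    rintro ⟨y, hy, rfl⟩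
    exact hint y (hzR hy) k (by rw [← hcos y (hzR hy), hk])
  have hψpq : ‖ψ q - ψ p‖ ≤ 96 * 4 / (R / 2) * ‖q - p‖ :=
    (convex_ball p (R / 2)).norm_image_sub_le_of_norm_deriv_le
      (fun z hz ↦ hψ.differentiableAt (isOpen_ball.mem_nhds (hhalf hz))) hderiv hpq hq
  have him : (ψ q).im = (ψ q - ψ p).im := by
    rw [sub_im, im_eq_zero_of_cos_eq_ofReal hx ((hcos p (hhalf hpq)).trans hp), sub_zero]
  rw [← hcos q (hhalf hq)]
  refine (norm_cos_le_cosh_im _).trans (Real.cosh_le_cosh.2 ?_)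
  calc |(ψ q).im| ≤ ‖ψ q - ψ p‖ := him ▸ abs_im_le_norm _
    _ ≤ 768 * ‖q - p‖ / R := hψpq.trans_eq (by ring)
    _ ≤ |768 * ‖q - p‖ / R| := le_abs_self _

lemma norm_sub_le_of_forall_exp_ne_one {F : ℂ → ℂ} {p q : ℂ} {R : ℝ}
    (hF : DifferentiableOn ℂ F (ball p R)) (hexp : ∀ z ∈ ball p R, exp (F z) ≠ 1)
    (hp : (F p).re = 0) (hq : q ∈ ball p (R / 2)) :
    ‖F q - F p‖ ≤ 2 * π * (Real.cosh (768 * ‖q - p‖ / R) + 1 / 2) := by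
  set y : ℝ := (F p).im / (2 * π)
  set f : ℂ → ℂ := fun z ↦ F z / (2 * π * I) - round y with hf
  have hpi : (2 * π * I : ℂ) ≠ 0 := two_pi_I_ne_zero
  have hFp : F p / (2 * π * I) = y := by
    rw [div_eq_iff hpi, ← re_add_im (F p), hp]
    simp only [y]
    push_cast
    field_simp
    simp
  have hfp : f p = (y - round y : ℝ) := by
    simp only [hf, hFp]
    push_cast
    rfl
  have hint : ∀ z ∈ ball p R, ∀ k : ℤ, f z ≠ k := by
    intro z hz k hk
    refine hexp z hz (exp_eq_one_iff.2 ⟨k + round y, ?_⟩)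
    rw [sub_eq_iff_eq_add, div_eq_iff hpi] at hk
    exact_mod_cast hk
  have hround : |y - round y| ≤ 1 / 2 := abs_sub_round y
  have hfq := norm_le_cosh_of_forall_ne_intCast ((hF.div_const _).sub_const _) hint
    (hround.trans (by norm_num)) hfp hq
  have hFf : F q - F p = 2 * π * I * (f q - f p) := by
    simp only [hf]
    field_simp
    ring
  have hnorm : ‖(2 * π * I : ℂ)‖ = 2 * π := by simp [abs_of_pos Real.pi_pos]
  have hfp' : ‖f p‖ ≤ 1 / 2 := by rwa [hfp, norm_real, Real.norm_eq_abs]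
  rw [hFf, norm_mul, hnorm]
  gcongr
  exact (norm_sub_le _ _).trans (add_le_add hfq hfp')

lemma norm_add_four_pi_I_sub_lt {F : ℂ → ℂ} {p : ℂ} {R : ℝ} (hR : 20000 ≤ R)
    (hF : DifferentiableOn ℂ F (ball p R)) (hexp : ∀ z ∈ ball p R, exp (F z) ≠ 1)
    (hp : (F p).re = 0) : ‖F (p + 4 * π * I) - F p‖ < 4 * π := by
  have hpi : ‖p + 4 * π * I - p‖ = 4 * π := by simp [abs_of_pos Real.pi_pos]
  have hq : p + 4 * π * I ∈ ball p (R / 2) := by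
    rw [mem_ball_iff_norm, hpi]
    linarith [Real.pi_lt_four]
  have harg : 768 * (4 * π) / R ≤ 1 / 2 := by
    rw [div_le_iff₀ (by linarith)]
    linarith [Real.pi_lt_d2]
  have hcosh : Real.cosh (768 * (4 * π) / R) < 3 / 2 := by
    have hR0 : 0 ≤ 768 * (4 * π) / R := by positivity
    calc Real.cosh (768 * (4 * π) / R) ≤ Real.cosh (1 / 2) :=
          Real.cosh_le_cosh.2 (abs_le_abs_of_nonneg hR0 harg)
      _ ≤ Real.exp ((1 / 2) ^ 2 / 2) := Real.cosh_le_exp_half_sq _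
      _ < Real.exp (1 / 3) := Real.exp_lt_exp.2 (by norm_num)
      _ ≤ 1 / (1 - 1 / 3) := Real.exp_bound_div_one_sub_of_interval (by norm_num) (by norm_num)
      _ = 3 / 2 := by norm_num
  have hle := norm_sub_le_of_forall_exp_ne_one hF hexp hp hq
  rw [hpi] at hle
  nlinarith [Real.pi_pos]

/-! ### Winding numbers -/

/-- The winding number about `0` of the closed curve `γ` restricted to `[0, 2π]`, encoded as a
relation: some continuous logarithm of `γ` increases by `2πim` from `0` to `2π`. -/
def HasWindingNumber (γ : ℝ → ℂ) (m : ℤ) : Prop :=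
  ∃ B : ℝ → ℂ, Continuous B ∧ (∀ t, exp (B t) = γ t) ∧ B (2 * π) = B 0 + m * (2 * π * I)

lemma hasWindingNumber_exp {B : ℝ → ℂ} (hB : Continuous B) (hB0 : B (2 * π) = B 0) :
    HasWindingNumber (fun t ↦ exp (B t)) 0 :=
  ⟨B, hB, fun _ ↦ rfl, by simpa using hB0⟩

lemma hasWindingNumber_of_mem_slitPlane {γ : ℝ → ℂ} (hγ : Continuous γ) (hγ0 : γ (2 * π) = γ 0)
    (hslit : ∀ t, γ t ∈ slitPlane) : HasWindingNumber γ 0 := by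
  simpa only [exp_log (slitPlane_ne_zero (hslit _))] using
    hasWindingNumber_exp (hγ.clog hslit) (by rw [hγ0])

lemma hasWindingNumber_circleMap {r : ℝ} (hr : r ≠ 0) : HasWindingNumber (circleMap 0 r) 1 := by
  refine ⟨fun t ↦ log r + t * I, by fun_prop, fun t ↦ ?_, by push_cast; ring⟩
  rw [exp_add, exp_log (ofReal_ne_zero.2 hr), circleMap_zero]

namespace HasWindingNumber

variable {γ γ' : ℝ → ℂ} {m m' : ℤ}

protected lemma continuous (h : HasWindingNumber γ m) : Continuous γ := by
  obtain ⟨B, hB, hexp, -⟩ := h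
  exact (continuous_exp.comp hB).congr hexp

lemma ne_zero (h : HasWindingNumber γ m) (t : ℝ) : γ t ≠ 0 := by
  obtain ⟨B, -, hexp, -⟩ := h
  exact hexp t ▸ exp_ne_zero _

lemma apply_two_pi (h : HasWindingNumber γ m) : γ (2 * π) = γ 0 := by
  obtain ⟨B, -, hexp, hm⟩ := h
  rw [← hexp, ← hexp, hm, exp_periodic.int_mul m]

lemma const_mul (h : HasWindingNumber γ m) {c : ℂ} (hc : c ≠ 0) :
    HasWindingNumber (fun t ↦ c * γ t) m := by
  obtain ⟨B, hB, hexp, hm⟩ := h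
  exact ⟨fun t ↦ log c + B t, hB.const_add _, fun t ↦ by rw [exp_add, exp_log hc, hexp],
    by simp only [hm, add_assoc]⟩

protected lemma mul (h : HasWindingNumber γ m) (h' : HasWindingNumber γ' m') :
    HasWindingNumber (fun t ↦ γ t * γ' t) (m + m') := by
  obtain ⟨B, hB, hexp, hm⟩ := h
  obtain ⟨B', hB', hexp', hm'⟩ := h'
  refine ⟨fun t ↦ B t + B' t, hB.add hB', fun t ↦ by rw [exp_add, hexp, hexp'], ?_⟩
  push_cast
  linear_combination hm + hm'

protected lemma pow (h : HasWindingNumber γ m) (k : ℕ) :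
    HasWindingNumber (fun t ↦ γ t ^ k) (k * m) := by
  obtain ⟨B, hB, hexp, hm⟩ := h
  refine ⟨fun t ↦ k * B t, hB.const_mul _, fun t ↦ by rw [exp_nat_mul, hexp], ?_⟩
  push_cast
  linear_combination (k : ℂ) * hm

protected lemma unique (h : HasWindingNumber γ m) (h' : HasWindingNumber γ m') : m = m' := by
  obtain ⟨B, hB, hexp, hm⟩ := h
  obtain ⟨B', hB', hexp', hm'⟩ := h'
  have hdiff : ∀ t, exp (B t - B' t) = 1 := fun t ↦ by
    rw [exp_sub, hexp, hexp', div_self (hexp t ▸ exp_ne_zero _)]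
  have hconst : B (2 * π) - B' (2 * π) = B 0 - B' 0 := isCoveringMap_exp.const_of_comp
    (hB.sub hB') (fun s t ↦ Subtype.ext ((hdiff s).trans (hdiff t).symm)) (2 * π) 0
  have hmm : (m : ℂ) * (2 * π * I) = m' * (2 * π * I) := by
    linear_combination hconst - hm + hm'
  exact_mod_cast mul_right_cancel₀ two_pi_I_ne_zero hmm

lemma one_sub_of_norm_lt_one (h : HasWindingNumber γ m) (hγ : ∀ t, ‖γ t‖ < 1) :
    HasWindingNumber (fun t ↦ 1 - γ t) 0 :=
  hasWindingNumber_of_mem_slitPlane (continuous_const.sub h.continuous) (by rw [h.apply_two_pi])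
    fun t ↦ sub_eq_add_neg 1 (γ t) ▸ mem_slitPlane_of_norm_lt_one (by rw [norm_neg]; exact hγ t)

lemma one_sub_of_one_lt_norm (h : HasWindingNumber γ m) (hγ : ∀ t, 1 < ‖γ t‖) :
    HasWindingNumber (fun t ↦ 1 - γ t) m := by
  have hinv : HasWindingNumber (fun t ↦ 1 + -(γ t)⁻¹) 0 := by
    refine hasWindingNumber_of_mem_slitPlane ((h.continuous.inv₀ h.ne_zero).neg.const_add 1)
      (by rw [h.apply_two_pi]) fun t ↦ mem_slitPlane_of_norm_lt_one ?_
    rw [norm_neg, norm_inv]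
    exact inv_lt_one_of_one_lt₀ (hγ t)
  have hfactor : (fun t ↦ 1 - γ t) = fun t ↦ -1 * (γ t * (1 + -(γ t)⁻¹)) := by
    funext t
    field_simp [h.ne_zero t]
    ring
  simpa [hfactor] using (h.mul hinv).const_mul (neg_ne_zero.2 one_ne_zero)

end HasWindingNumber

lemma exists_norm_exp_mul_pow_eq_one {a b : ℂ → ℂ} {r : ℝ} (hr : 0 < r)
    (ha : ContinuousOn a (sphere 0 r)) (hb : ContinuousOn b (sphere 0 r)) {j k : ℕ} (hk : k ≠ 0)
    (hjk : j ≠ k) {c : ℂ} (hc : 1 < ‖c‖ * r ^ k)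
    (hab : ∀ z ∈ sphere (0 : ℂ) r, exp (a z) * z ^ j + exp (b z) * (1 - c * z ^ k) = 1) :
    ∃ z ∈ sphere (0 : ℂ) r, ‖exp (a z) * z ^ j‖ = 1 := by
  by_contra! hne
  set Z : ℝ → ℂ := circleMap 0 r
  have hZ : ∀ t, Z t ∈ sphere 0 r := circleMap_mem_sphere 0 hr.le
  have hZpow (i : ℕ) : HasWindingNumber (fun t ↦ Z t ^ i) i := by
    simpa using (hasWindingNumber_circleMap hr.ne').pow i
  have hexp {d : ℂ → ℂ} (hd : ContinuousOn d (sphere 0 r)) :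
      HasWindingNumber (fun t ↦ exp (d (Z t))) 0 :=
    hasWindingNumber_exp (hd.comp_continuous (continuous_circleMap 0 r) hZ)
      (congrArg d (periodic_circleMap 0 r).eq)
  set H : ℝ → ℂ := fun t ↦ exp (a (Z t)) * Z t ^ j
  have hH : HasWindingNumber H j := by simpa using (hexp ha).mul (hZpow j)
  have hone_sub : HasWindingNumber (fun t ↦ 1 - H t) k := by
    have hc0 : c ≠ 0 := by
      rintro rfl
      norm_num at hc
    have hsub := ((hZpow k).const_mul hc0).one_sub_of_one_lt_norm fun t ↦ by
      rwa [norm_mul, norm_pow, mem_sphere_zero_iff_norm.1 (hZ t)]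
    have hHeq : (fun t ↦ 1 - H t) = fun t ↦ exp (b (Z t)) * (1 - c * Z t ^ k) :=
      funext fun t ↦ sub_eq_of_eq_add' (hab _ (hZ t)).symm
    simpa [hHeq] using (hexp hb).mul hsub
  have hside : (∀ t, ‖H t‖ < 1) ∨ ∀ t, 1 < ‖H t‖ := by
    by_contra! hnot
    obtain ⟨t, ht⟩ := mem_range_of_exists_le_of_exists_ge hH.continuous.norm hnot.2 hnot.1
    exact hne _ (hZ t) ht
  rcases hside with hlt | hgt
  · exact hk (by exact_mod_cast hone_sub.unique (hH.one_sub_of_norm_lt_one hlt))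
  · exact hjk (by exact_mod_cast (hH.one_sub_of_one_lt_norm hgt).unique hone_sub)

/-! ### Zero-free solutions on the open disc -/

/-- `f` is a unit of the ring of holomorphic functions on the open unit disc. In contrast with
`IsRDiscUnit`, there is neither a symmetry condition nor one on the boundary behaviour. -/
def IsZeroFreeOnDisc (f : ℂ → ℂ) : Prop :=
  DifferentiableOn ℂ f (ball 0 1) ∧ ∀ z ∈ ball (0 : ℂ) 1, f z ≠ 0

lemma IsRDiscUnit.isZeroFreeOnDisc {f : ℂ → ℂ} (hf : IsRDiscUnit f) : IsZeroFreeOnDisc f :=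
  ⟨hf.1.2.1, fun z hz ↦ hf.2 z (ball_subset_closedBall hz)⟩

lemma IsZeroFreeOnDisc.exists_exp_eq {f : ℂ → ℂ} (hf : IsZeroFreeOnDisc f) :
    ∃ g : ℂ → ℂ, DifferentiableOn ℂ g (ball 0 1) ∧ ∀ z ∈ ball (0 : ℂ) 1, exp (g z) = f z :=
  exists_differentiableOn_exp_eq isOpen_ball (isSimplyConnected_ball one_pos) hf.1 hf.2

lemma IsZeroFreeOnDisc.exists_norm_mul_pow_eq_one {u v : ℂ → ℂ} (hu : IsZeroFreeOnDisc u)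
    (hv : IsZeroFreeOnDisc v) {j k : ℕ} (hk : k ≠ 0) (hjk : j ≠ k) {c : ℂ} {r : ℝ} (hr : 0 < r)
    (hr1 : r < 1) (hc : 1 < ‖c‖ * r ^ k)
    (huv : ∀ z ∈ ball (0 : ℂ) 1, u z * z ^ j + v z * (1 - c * z ^ k) = 1) :
    ∃ z ∈ sphere (0 : ℂ) r, ‖u z * z ^ j‖ = 1 := by
  obtain ⟨a, ha, hau⟩ := hu.exists_exp_eq
  obtain ⟨b, hb, hbv⟩ := hv.exists_exp_eq
  have hsphere : sphere (0 : ℂ) r ⊆ ball 0 1 := sphere_subset_ball hr1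
  obtain ⟨z, hz, hza⟩ := exists_norm_exp_mul_pow_eq_one hr (ha.continuousOn.mono hsphere)
    (hb.continuousOn.mono hsphere) hk hjk hc fun z hz ↦ by
      rw [hau z (hsphere hz), hbv z (hsphere hz), huv z (hsphere hz)]
  exact ⟨z, hz, by rwa [← hau z (hsphere hz)]⟩

lemma exp_mem_ball_zero_one_iff {ζ : ℂ} : exp ζ ∈ ball (0 : ℂ) 1 ↔ ζ.re < 0 := by
  rw [mem_ball_zero_iff, norm_exp, Real.exp_lt_one_iff]

lemma IsZeroFreeOnDisc.eq_zero_of_forall_mul_exp_pow_ne_one {u : ℂ → ℂ} (hu : IsZeroFreeOnDisc u)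
    {j : ℕ} {p : ℂ} {R : ℝ} (hR : 20000 ≤ R) (hre : ∀ ζ ∈ ball p R, ζ.re < 0)
    (hne : ∀ ζ ∈ ball p R, u (exp ζ) * exp ζ ^ j ≠ 1) (hp : ‖u (exp p) * exp p ^ j‖ = 1) :
    j = 0 := by
  have hdisc : ∀ ζ ∈ ball p R, exp ζ ∈ ball (0 : ℂ) 1 :=
    fun ζ hζ ↦ exp_mem_ball_zero_one_iff.2 (hre ζ hζ)
  obtain ⟨a, ha, hau⟩ := hu.exists_exp_eq
  set F : ℂ → ℂ := fun ζ ↦ a (exp ζ) + j * ζ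
  have hF : DifferentiableOn ℂ F (ball p R) :=
    (ha.comp differentiable_exp.differentiableOn hdisc).add (by fun_prop)
  have hexpF : ∀ ζ ∈ ball p R, exp (F ζ) = u (exp ζ) * exp ζ ^ j := fun ζ hζ ↦ by
    rw [exp_add, exp_nat_mul, hau _ (hdisc ζ hζ)]
  have hFp : (F p).re = 0 := by
    rwa [← hexpF p (mem_ball_self (by linarith)), norm_exp, Real.exp_eq_one_iff] at hp
  have hperiod : F (p + 4 * π * I) - F p = j * (4 * π * I) := by
    have : exp (p + 4 * π * I) = exp p := by
      rw [show p + 4 * π * I = p + 2 * π * I + 2 * π * I by ring, exp_periodic, exp_periodic]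
    simp only [F, this]
    ring
  have hlt := norm_add_four_pi_I_sub_lt hR hF (fun ζ hζ ↦ (hexpF ζ hζ).trans_ne (hne ζ hζ)) hFp
  have hnorm : ‖(4 * π * I : ℂ)‖ = 4 * π := by simp [abs_of_pos Real.pi_pos]
  rw [hperiod, norm_mul, hnorm, norm_natCast, mul_lt_iff_lt_one_left (by positivity)] at hlt
  exact Nat.lt_one_iff.1 (by exact_mod_cast hlt)

theorem not_exists_isZeroFreeOnDisc_mul_pow_add_eq_one {j k : ℕ} (hj : j ≠ 0) (hk : k ≠ 0)
    (hjk : j ≠ k) {c : ℂ} (hc : Real.exp (40000 * k) ≤ ‖c‖) :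
    ¬ ∃ u v : ℂ → ℂ, IsZeroFreeOnDisc u ∧ IsZeroFreeOnDisc v ∧
      ∀ z ∈ ball (0 : ℂ) 1, u z * z ^ j + v z * (1 - c * z ^ k) = 1 := by
  rintro ⟨u, v, hu, hv, huv⟩
  have hcpow : ∀ x : ℝ, -40000 < x → 1 < ‖c‖ * Real.exp x ^ k := by
    intro x hx
    have hk0 : (0 : ℝ) < k := by positivity
    calc 1 < Real.exp (40000 * k + k * x) := Real.one_lt_exp_iff.2 (by nlinarith)
      _ ≤ ‖c‖ * Real.exp x ^ k := by rw [Real.exp_add, Real.exp_nat_mul]; gcongr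
  obtain ⟨z, hz, hzu⟩ := hu.exists_norm_mul_pow_eq_one hv hk hjk (Real.exp_pos (-20000))
    (Real.exp_lt_one_iff.2 (by norm_num)) (hcpow _ (by norm_num)) huv
  obtain ⟨p, rfl⟩ : ∃ p, exp p = z := ⟨log z, exp_log (ne_of_mem_sphere hz (Real.exp_pos _).ne')⟩
  have hp : p.re = -20000 := by rwa [mem_sphere_zero_iff_norm, norm_exp, Real.exp_eq_exp] at hz
  have hre : ∀ ζ ∈ ball p 20000, -40000 < ζ.re ∧ ζ.re < 0 := by
    intro ζ hζ
    have := abs_lt.1 ((abs_re_le_norm _).trans_lt (mem_ball_iff_norm.1 hζ))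
    rw [sub_re, hp] at this
    exact ⟨by linarith, by linarith⟩
  refine hj (hu.eq_zero_of_forall_mul_exp_pow_ne_one le_rfl (fun ζ hζ ↦ (hre ζ hζ).2) ?_ hzu)
  intro ζ hζ h
  have hdisc : exp ζ ∈ ball (0 : ℂ) 1 := exp_mem_ball_zero_one_iff.2 (hre ζ hζ).2
  have hvz : v (exp ζ) * (1 - c * exp ζ ^ k) = 0 := by linear_combination huv _ hdisc - h
  have hone : c * exp ζ ^ k = 1 :=
    (sub_eq_zero.1 ((mul_eq_zero.1 hvz).resolve_left (hv.2 _ hdisc))).symm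
  have hgt := hcpow ζ.re (hre ζ hζ).1
  rw [← norm_exp, ← norm_pow, ← norm_mul, hone, norm_one] at hgt
  exact hgt.false

lemma bezoutPair_pow_one_sub_mul_pow {j k : ℕ} (hjk : j ≤ k) (c : ℝ) :
    BezoutPair (fun z ↦ z ^ j) (fun z ↦ 1 - c * z ^ k) := by
  refine ⟨fun z ↦ c * z ^ (k - j), fun _ ↦ 1, ⟨by fun_prop, by fun_prop, by simp⟩,
    ⟨by fun_prop, by fun_prop, by simp⟩, fun z _ ↦ ?_⟩
  rw [mul_assoc, pow_sub_mul_pow z hjk]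
  ring

theorem explicit_non_totally_reducible_pair_general {j k : ℕ} (hj : Even j) (hj0 : j ≠ 0)
    (hjk : j < k) {c : ℝ} (hc : Real.exp (40000 * k) ≤ |c|) :
    BezoutPair (fun z ↦ z ^ j) (fun z ↦ 1 - c * z ^ k) ∧
    (∀ x : ℝ, 1 - (c : ℂ) * (x : ℂ) ^ k = 0 → 0 < ((x : ℂ) ^ j).re) ∧
    (∀ x : ℝ, (x : ℂ) ^ j = 0 → 0 < (1 - (c : ℂ) * (x : ℂ) ^ k).re) ∧
    ¬ ∃ u v : ℂ → ℂ, IsZeroFreeOnDisc u ∧ IsZeroFreeOnDisc v ∧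
      ∀ z ∈ ball (0 : ℂ) 1, u z * z ^ j + v z * (1 - c * z ^ k) = 1 := by
  have hk0 : k ≠ 0 := (hj0.bot_lt.trans hjk).ne'
  refine ⟨bezoutPair_pow_one_sub_mul_pow hjk.le c, fun x hx ↦ ?_, fun x hx ↦ ?_,
    not_exists_isZeroFreeOnDisc_mul_pow_add_eq_one hj0 hk0 hjk.ne (by simpa using hc)⟩
  · have hx0 : x ≠ 0 := by
      rintro rfl
      simp [hk0] at hx
    exact_mod_cast hj.pow_pos hx0
  · simp [pow_eq_zero_iff hj0 |>.1 hx, hk0]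

theorem explicit_non_totally_reducible_pair :
    ∃ n : ℕ,
      BezoutPair (fun z => z ^ 2) (fun z => 1 - (n : ℂ) ^ 2 * z ^ 4) ∧
      (∀ x ∈ Set.Icc (-1 : ℝ) 1, 1 - (n : ℂ) ^ 2 * (x : ℂ) ^ 4 = 0 → 0 < ((x : ℂ) ^ 2).re) ∧
      (∀ x ∈ Set.Icc (-1 : ℝ) 1, (x : ℂ) ^ 2 = 0 → 0 < (1 - (n : ℂ) ^ 2 * (x : ℂ) ^ 4).re) ∧
      ¬ ∃ u v : ℂ → ℂ, IsRDiscUnit u ∧ IsRDiscUnit v ∧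
          ∀ z ∈ closedBall (0 : ℂ) 1, u z * z ^ 2 + v z * (1 - (n : ℂ) ^ 2 * z ^ 4) = 1 := by
  obtain ⟨n, hn⟩ := exists_nat_ge (Real.exp (40000 * (4 : ℕ)))
  have hc : Real.exp (40000 * (4 : ℕ)) ≤ |(n : ℝ) ^ 2| :=
    (hn.trans (mod_cast Nat.le_self_pow two_ne_zero n)).trans (le_abs_self _)
  obtain ⟨hbezout, hf, hg, hunits⟩ :=
    explicit_non_totally_reducible_pair_general even_two two_ne_zero (by norm_num) hc
  push_cast at hbezout hf hg hunits
  exact ⟨n, hbezout, fun x _ ↦ hf x, fun x _ ↦ hg x, fun ⟨u, v, hu, hv, huv⟩ ↦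
    hunits ⟨u, v, hu.isZeroFreeOnDisc, hv.isZeroFreeOnDisc,
      fun z hz ↦ huv z (ball_subset_closedBall hz)⟩⟩
end

section
/- Let (f,g) be an invertible pair in the real disc algebra A_ℝ(D), and suppose f(x) ≠ g(x) for every x ∈ [-1,1]. Then there exist α, β ∈ A_ℝ(D) such that αf + βg and αg + βf are both units of A_ℝ(D). -/
open Complex Metric ComplexConjugate

/-!
Put `u = f + g` and `v = f - g`, which are coprime. If `v ∣ exp k + 1` for some `k`, the Chinese
remainder theorem gives `x ≡ 0 mod u`, `x ≡ k mod v`, hence `exp x ≡ 1 mod u` and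
`exp x ≡ -1 mod v`. Writing `u A = 1 - exp x` and `v B = 1 + exp x`, the functions
`α = (A + B) / 2` and `β = (A - B) / 2` satisfy `α f + β g = 1` and `α g + β f = -exp x`.

That `-1` is an exponential modulo `v` is a connectedness argument: in a commutative Banach algebra,
the elements congruent to an exponential form a clopen subset of those invertible modulo `v`. The
path `cos θ + sin θ z` runs from `1` to `-1` and stays invertible modulo `v`, since its only
possible zeros in the disc are real, and `v` has none there.
-/

open scoped Topology

section CommRing

variable {R : Type*} [CommRing R]

lemma isCoprime_add_sub (h2 : IsUnit (2 : R)) {f g : R} (hfg : IsCoprime f g) :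
    IsCoprime (f + g) (f - g) := by
  obtain ⟨half, hhalf⟩ := h2.exists_right_inv
  obtain ⟨a, b, hab⟩ := hfg
  exact ⟨half * (a + b), half * (a - b), by linear_combination (a * f + b * g) * hhalf + hab⟩

lemma isUnit_mk_span_singleton_of_isCoprime {x v : R} (h : IsCoprime x v) :
    IsUnit (Ideal.Quotient.mk (Ideal.span {v}) x) := by
  obtain ⟨a, b, hab⟩ := h
  refine .of_mul_eq_one (Ideal.Quotient.mk _ a) ?_
  rw [← map_mul, ← map_one (Ideal.Quotient.mk _), Ideal.Quotient.eq, Ideal.mem_span_singleton]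
  exact ⟨-b, by linear_combination hab⟩

end CommRing

section Exponential

variable {A : Type*} [NormedRing A] [NormedAlgebra ℝ A] [CompleteSpace A]

lemma dvd_exp_sub_one (x : A) : x ∣ NormedSpace.exp x - 1 := by
  have hderiv (t : ℝ) := hasDerivAt_exp_smul_const' (𝕂 := ℝ) x t
  have hcont : Continuous fun t : ℝ => NormedSpace.exp (t • x) :=
    continuous_iff_continuousAt.2 fun t => (hderiv t).continuousAt
  refine ⟨∫ t in (0 : ℝ)..1, NormedSpace.exp (t • x), ?_⟩
  calc NormedSpace.exp x - 1 = ∫ t in (0 : ℝ)..1, x * NormedSpace.exp (t • x) := by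
        rw [intervalIntegral.integral_eq_sub_of_hasDerivAt (fun t _ => hderiv t)
          ((continuous_const.mul hcont).intervalIntegrable 0 1), one_smul, zero_smul,
          NormedSpace.exp_zero]
    _ = x * ∫ t in (0 : ℝ)..1, NormedSpace.exp (t • x) :=
        (ContinuousLinearMap.mul ℝ A x).intervalIntegral_comp_comm (hcont.intervalIntegrable 0 1)

lemma range_exp_mem_nhds_one : Set.range (NormedSpace.exp : A → A) ∈ 𝓝 1 := by
  have hmap : Filter.map (NormedSpace.exp : A → A) (𝓝 0) = 𝓝 1 := by
    simpa only [NormedSpace.exp_zero] using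
      (hasStrictFDerivAt_exp_zero (𝕂 := ℝ) (𝔸 := A)).map_nhds_eq_of_equiv
        (f' := ContinuousLinearEquiv.refl ℝ A)
  exact hmap ▸ Filter.range_mem_map

end Exponential

section ExponentialsModuloIdeal

variable {A : Type*} [NormedCommRing A] [NormedAlgebra ℝ A] [CompleteSpace A]

lemma sub_dvd_exp_sub_exp (x y : A) : x - y ∣ NormedSpace.exp x - NormedSpace.exp y := by
  let := NormedAlgebra.restrictScalars ℚ ℝ A
  have hfactor : NormedSpace.exp x - NormedSpace.exp y =
      (NormedSpace.exp (x - y) - 1) * NormedSpace.exp y := by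
    rw [sub_mul, ← NormedSpace.exp_add, sub_add_cancel, one_mul]
  exact hfactor ▸ (dvd_exp_sub_one (x - y)).mul_right _

/-- The elements congruent to an exponential modulo the ideal `I`. It stands in for the exponentials
of `A ⧸ I`, which need not be a normed ring because `I` need not be closed. -/
def expModSet (I : Ideal A) : Set A :=
  {x | ∃ k, Ideal.Quotient.mk I x = Ideal.Quotient.mk I (NormedSpace.exp k)}

variable {I : Ideal A}

lemma eventually_mk_eq_mk_mul_exp {x : A} (hx : IsUnit (Ideal.Quotient.mk I x)) :
    ∀ᶠ y in 𝓝 x, ∃ l,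
      Ideal.Quotient.mk I y = Ideal.Quotient.mk I x * Ideal.Quotient.mk I (NormedSpace.exp l) := by
  obtain ⟨q, hq⟩ := hx.exists_right_inv
  obtain ⟨p, rfl⟩ := Ideal.Quotient.mk_surjective q
  have htendsto : Filter.Tendsto (fun y => 1 + p * (y - x)) (𝓝 x) (𝓝 1) :=
    Continuous.tendsto' (by fun_prop) _ _ (by simp)
  filter_upwards [htendsto range_exp_mem_nhds_one] with y ⟨l, hl⟩
  refine ⟨l, ?_⟩
  simp only [hl, map_add, map_one, map_mul, map_sub]
  linear_combination (Ideal.Quotient.mk I x - Ideal.Quotient.mk I y) * hq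

lemma mem_expModSet_of_mk_mul_exp_eq {x y l : A} (hx : x ∈ expModSet I)
    (h : Ideal.Quotient.mk I x * Ideal.Quotient.mk I (NormedSpace.exp l) = Ideal.Quotient.mk I y) :
    y ∈ expModSet I := by
  let := NormedAlgebra.restrictScalars ℚ ℝ A
  obtain ⟨k, hk⟩ := hx
  exact ⟨k + l, by rw [NormedSpace.exp_add, map_mul, ← hk, h]⟩

lemma isOpen_expModSet : IsOpen (expModSet I) := by
  let := NormedAlgebra.restrictScalars ℚ ℝ A
  refine isOpen_iff_mem_nhds.2 fun x hx => ?_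
  have hunit : IsUnit (Ideal.Quotient.mk I x) := by
    obtain ⟨k, hk⟩ := hx
    exact hk ▸ (NormedSpace.isUnit_exp k).map _
  filter_upwards [eventually_mk_eq_mk_mul_exp hunit] with y ⟨l, hl⟩
  exact mem_expModSet_of_mk_mul_exp_eq hx hl.symm

theorem subset_expModSet_of_isPreconnected {S : Set A} (hS : IsPreconnected S)
    (hunit : ∀ x ∈ S, IsUnit (Ideal.Quotient.mk I x)) (hne : (S ∩ expModSet I).Nonempty) :
    S ⊆ expModSet I := by
  let := NormedAlgebra.restrictScalars ℚ ℝ A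
  refine hS.subset_of_closure_inter_subset isOpen_expModSet hne fun x ⟨hxcl, hxS⟩ => ?_
  obtain ⟨y, ⟨l, hl⟩, hy⟩ :=
    mem_closure_iff_nhds.1 hxcl _ (eventually_mk_eq_mk_mul_exp (hunit x hxS))
  refine mem_expModSet_of_mk_mul_exp_eq (l := -l) hy ?_
  rw [hl, mul_assoc, ← map_mul, ← NormedSpace.exp_add, add_neg_cancel, NormedSpace.exp_zero,
    map_one, mul_one]

theorem exists_dvd_exp_sub_exp_of_isCoprime {u v : A} (huv : IsCoprime u v) (k l : A) :
    ∃ x, u ∣ NormedSpace.exp x - NormedSpace.exp k ∧ v ∣ NormedSpace.exp x - NormedSpace.exp l := by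
  obtain ⟨a, b, hab⟩ := huv
  refine ⟨a * u * l + b * v * k, ?_, ?_⟩
  · refine Dvd.dvd.trans ⟨a * (l - k), ?_⟩ (sub_dvd_exp_sub_exp _ _)
    linear_combination k * hab
  · refine Dvd.dvd.trans ⟨b * (k - l), ?_⟩ (sub_dvd_exp_sub_exp _ _)
    linear_combination l * hab

theorem exists_isUnit_swap_of_neg_one_mem_expModSet {f g : A} (hfg : IsCoprime f g)
    (hexp : -1 ∈ expModSet (Ideal.span {f - g})) :
    ∃ α β, α * f + β * g = 1 ∧ IsUnit (α * g + β * f) := by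
  let := NormedAlgebra.restrictScalars ℚ ℝ A
  have h2 : IsUnit (2 : A) := by
    simpa only [map_ofNat] using (IsUnit.mk0 (2 : ℝ) two_ne_zero).map (algebraMap ℝ A)
  obtain ⟨half, hhalf⟩ := h2.exists_right_inv
  obtain ⟨k, hk⟩ := hexp
  obtain ⟨m, hm⟩ := Ideal.mem_span_singleton.1 (Ideal.Quotient.eq.1 hk)
  obtain ⟨x, ⟨p, hp⟩, ⟨q, hq⟩⟩ := exists_dvd_exp_sub_exp_of_isCoprime (isCoprime_add_sub h2 hfg) 0 k
  rw [NormedSpace.exp_zero] at hp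
  refine ⟨half * (q - m - p), half * (-p - (q - m)), ?_, ?_⟩
  · linear_combination half * (hp - hq + hm) + hhalf
  · have hswap : half * (q - m - p) * g + half * (-p - (q - m)) * f = -NormedSpace.exp x := by
      linear_combination half * (hp + hq - hm) - NormedSpace.exp x * hhalf
    exact hswap ▸ (NormedSpace.isUnit_exp x).neg

end ExponentialsModuloIdeal

section PolynomialApproximation

open Polynomial

variable {f : ℂ → ℂ} {c : ℂ} {R ε : ℝ}

lemma exists_polynomial_near_of_differentiableOn_ball {r : ℝ} (hf : DifferentiableOn ℂ f (ball c R))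
    (hr : 0 ≤ r) (hrR : r < R) (hε : 0 < ε) :
    ∃ p : ℂ[X], ∀ z ∈ closedBall c r, ‖f z - p.eval z‖ < ε := by
  obtain ⟨s, hrs, hsR⟩ := exists_between hrR
  obtain ⟨ρ, hsρ, hρR⟩ := exists_between hsR
  lift s to NNReal using hr.trans hrs.le
  lift ρ to NNReal using hr.trans (hrs.trans hsρ).le
  have hseries := (hf.mono (closedBall_subset_ball hρR)).hasFPowerSeriesOnBall
    (pos_of_gt (NNReal.coe_lt_coe.1 hsρ))
  obtain ⟨n, hn⟩ := (Metric.tendstoUniformlyOn_iff.1 (hseries.tendstoUniformlyOn'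
    (ENNReal.coe_lt_coe.2 (NNReal.coe_lt_coe.1 hsρ))) ε hε).exists
  refine ⟨(∑ k ∈ Finset.range n, C ((cauchyPowerSeries f c ρ).coeff k) * X ^ k).comp (X - C c),
    fun z hz => ?_⟩
  have hpartial : eval z ((∑ k ∈ Finset.range n,
      C ((cauchyPowerSeries f c ρ).coeff k) * X ^ k).comp (X - C c)) =
        (cauchyPowerSeries f c ρ).partialSum n (z - c) := by
    simp only [eval_comp, eval_finsetSum, eval_mul, eval_C, eval_pow, eval_X, eval_sub,
      FormalMultilinearSeries.partialSum, FormalMultilinearSeries.apply_eq_pow_smul_coeff,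
      smul_eq_mul, mul_comm]
  rw [hpartial, ← dist_eq_norm]
  exact hn z (closedBall_subset_ball hrs hz)

lemma exists_dilation_near (hf : ContinuousOn f (closedBall c R)) (hR : 0 < R) (hε : 0 < ε) :
    ∃ r ∈ Set.Ico (0 : ℝ) 1, ∀ z ∈ closedBall c R, ‖f z - f (c + r * (z - c))‖ < ε := by
  obtain ⟨δ, hδ, hfδ⟩ := Metric.uniformContinuousOn_iff.1
    ((isCompact_closedBall c R).uniformContinuousOn_of_continuous hf) ε hε
  obtain ⟨r, hr, hr1⟩ := exists_between (max_lt one_pos (sub_lt_self 1 (div_pos hδ hR)))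
  have hr0 : 0 < r := (le_max_left _ _).trans_lt hr
  have hrδ : (1 - r) * R < δ := by
    rw [← lt_div_iff₀ hR]
    linarith [(le_max_right _ _).trans_lt hr]
  refine ⟨r, ⟨hr0.le, hr1⟩, fun z hz => ?_⟩
  rw [mem_closedBall_iff_norm] at hz
  rw [← dist_eq_norm]
  refine hfδ z (mem_closedBall_iff_norm.2 hz) _ (mem_closedBall_iff_norm.2 ?_) ?_
  · rw [add_sub_cancel_left, norm_mul, norm_real, Real.norm_of_nonneg hr0.le]
    nlinarith [norm_nonneg (z - c)]
  · have hdiff : z - (c + r * (z - c)) = ((1 - r : ℝ) : ℂ) * (z - c) := by push_cast; ring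
    rw [dist_eq_norm, hdiff, norm_mul, norm_real, Real.norm_of_nonneg (by linarith)]
    exact (mul_le_mul_of_nonneg_left hz (by linarith)).trans_lt hrδ

lemma exists_polynomial_near (hcont : ContinuousOn f (closedBall c R))
    (hdiff : DifferentiableOn ℂ f (ball c R)) (hR : 0 < R) (hε : 0 < ε) :
    ∃ p : ℂ[X], ∀ z ∈ closedBall c R, ‖f z - p.eval z‖ < ε := by
  obtain ⟨r, ⟨hr0, hr1⟩, hdil⟩ := exists_dilation_near hcont hR (half_pos hε)
  obtain ⟨p, hp⟩ := exists_polynomial_near_of_differentiableOn_ball hdiff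
    (mul_nonneg hr0 hR.le) (mul_lt_of_lt_one_left hR hr1) (half_pos hε)
  refine ⟨p.comp (C c + C (r : ℂ) * (X - C c)), fun z hz => ?_⟩
  have hmem : c + r * (z - c) ∈ closedBall c (r * R) := by
    rw [mem_closedBall_iff_norm, add_sub_cancel_left, norm_mul, norm_real,
      Real.norm_of_nonneg hr0]
    exact mul_le_mul_of_nonneg_left (mem_closedBall_iff_norm.1 hz) hr0
  have heval : (p.comp (C c + C (r : ℂ) * (X - C c))).eval z = p.eval (c + r * (z - c)) := by simp
  rw [heval]
  calc ‖f z - p.eval (c + r * (z - c))‖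
      ≤ ‖f z - f (c + r * (z - c))‖ + ‖f (c + r * (z - c)) - p.eval (c + r * (z - c))‖ :=
        norm_sub_le_norm_sub_add_norm_sub _ _ _
    _ < ε / 2 + ε / 2 := add_lt_add (hdil z hz) (hp _ hmem)
    _ = ε := add_halves ε

lemma exists_real_polynomial_eq_symmetrization (p : ℂ[X]) :
    ∃ q : ℝ[X], ∀ z : ℂ, aeval z q = (p.eval z + conj (p.eval (conj z))) / 2 := by
  induction p using Polynomial.induction_on' with
  | add p₁ p₂ h₁ h₂ =>
    obtain ⟨q₁, hq₁⟩ := h₁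
    obtain ⟨q₂, hq₂⟩ := h₂
    refine ⟨q₁ + q₂, fun z => ?_⟩
    simp only [map_add, hq₁, hq₂, eval_add]
    ring
  | monomial n a =>
    refine ⟨monomial n a.re, fun z => ?_⟩
    simp only [aeval_monomial, eval_monomial, map_mul, map_pow, conj_conj, coe_algebraMap,
      re_eq_add_conj]
    ring

end PolynomialApproximation

lemma conj_mem_closedBall {z : ℂ} {r : ℝ} (hz : z ∈ closedBall (0 : ℂ) r) :
    conj z ∈ closedBall (0 : ℂ) r := by
  simpa only [mem_closedBall_zero_iff, RCLike.norm_conj] using hz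

lemma ofReal_mem_closedBall {a r : ℝ} (ha : a ∈ Set.Icc (-r) r) :
    (a : ℂ) ∈ closedBall (0 : ℂ) r := by
  rw [mem_closedBall_zero_iff, norm_real]
  exact abs_le.2 ha

namespace IsRDisc

variable {f g : ℂ → ℂ}

lemma add (hf : IsRDisc f) (hg : IsRDisc g) : IsRDisc (fun z => f z + g z) :=
  ⟨hf.1.add hg.1, hf.2.1.add hg.2.1, fun z hz => by
    rw [map_add, ← hf.2.2 z hz, ← hg.2.2 z hz]⟩

lemma sub (hf : IsRDisc f) (hg : IsRDisc g) : IsRDisc (fun z => f z - g z) :=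
  ⟨hf.1.sub hg.1, hf.2.1.sub hg.2.1, fun z hz => by
    rw [map_sub, ← hf.2.2 z hz, ← hg.2.2 z hz]⟩

lemma mul (hf : IsRDisc f) (hg : IsRDisc g) : IsRDisc (fun z => f z * g z) :=
  ⟨hf.1.mul hg.1, hf.2.1.mul hg.2.1, fun z hz => by
    rw [map_mul, ← hf.2.2 z hz, ← hg.2.2 z hz]⟩

lemma const (c : ℝ) : IsRDisc (fun _ => (c : ℂ)) :=
  ⟨continuousOn_const, differentiableOn_const _, fun _ _ => (conj_ofReal c).symm⟩

lemma id : IsRDisc (fun z => z) :=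
  ⟨continuousOn_id, differentiableOn_id, fun z _ => (conj_conj z).symm⟩

lemma inv (hf : IsRDisc f) (hne : ∀ z ∈ closedBall (0 : ℂ) 1, f z ≠ 0) :
    IsRDisc (fun z => (f z)⁻¹) :=
  ⟨hf.1.inv₀ hne, hf.2.1.inv fun z hz => hne z (ball_subset_closedBall hz), fun z hz => by
    rw [map_inv₀, ← hf.2.2 z hz]⟩

lemma aeval (p : Polynomial ℝ) : IsRDisc (fun z => Polynomial.aeval z p) :=
  ⟨p.continuous_aeval.continuousOn, p.differentiable_aeval.differentiableOn,
    fun z _ => by simp only [Polynomial.aeval_conj, conj_conj]⟩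

lemma exists_real_polynomial_near (hf : IsRDisc f) {ε : ℝ} (hε : 0 < ε) :
    ∃ p : Polynomial ℝ, ∀ z ∈ closedBall (0 : ℂ) 1, ‖f z - Polynomial.aeval z p‖ < ε := by
  obtain ⟨p, hp⟩ := exists_polynomial_near hf.1 hf.2.1 one_pos hε
  obtain ⟨q, hq⟩ := exists_real_polynomial_eq_symmetrization p
  refine ⟨q, fun z hz => ?_⟩
  have hconj : ‖conj (f (conj z) - p.eval (conj z))‖ < ε := by
    simpa only [RCLike.norm_conj] using hp _ (conj_mem_closedBall hz)
  rw [map_sub, ← hf.2.2 z hz] at hconj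
  have hmean : f z - Polynomial.aeval z q =
      ((f z - p.eval z) + (f z - conj (p.eval (conj z)))) / 2 := by rw [hq]; ring
  rw [hmean, norm_div, norm_ofNat, div_lt_iff₀ two_pos]
  linarith [norm_add_le (f z - p.eval z) (f z - conj (p.eval (conj z))), hp z hz]

end IsRDisc

/-- The real disc algebra as a closed subalgebra of the continuous functions on the closed disc:
its elements are the restrictions of the functions satisfying `IsRDisc`, whose values outside the
disc are arbitrary. -/
def realDiscAlgebra : Subalgebra ℝ C(closedBall (0 : ℂ) 1, ℂ) where
  carrier := {F | ∃ f, IsRDisc f ∧ ∀ z, F z = f z}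
  mul_mem' := by
    rintro F G ⟨f, hf, hFf⟩ ⟨g, hg, hGg⟩
    exact ⟨_, hf.mul hg, fun z => congrArg₂ (· * ·) (hFf z) (hGg z)⟩
  add_mem' := by
    rintro F G ⟨f, hf, hFf⟩ ⟨g, hg, hGg⟩
    exact ⟨_, hf.add hg, fun z => congrArg₂ (· + ·) (hFf z) (hGg z)⟩
  algebraMap_mem' c := ⟨_, .const c, fun _ => rfl⟩

lemma isClosed_realDiscAlgebra : IsClosed (realDiscAlgebra : Set C(closedBall (0 : ℂ) 1, ℂ)) := by
  refine IsSeqClosed.isClosed fun F G hF hFG => ?_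
  choose f hf hFf using hF
  obtain ⟨g, rfl⟩ := ContinuousMap.exists_restrict_eq isClosed_closedBall G
  have hunif : TendstoUniformlyOn f g Filter.atTop (closedBall 0 1) := by
    rw [tendstoUniformlyOn_iff_tendstoUniformly_comp_coe]
    simpa only [hFf] using! ContinuousMap.tendsto_iff_tendstoUniformly.1 hFG
  have hdiff : DifferentiableOn ℂ g (ball 0 1) :=
    (hunif.mono ball_subset_closedBall).tendstoLocallyUniformlyOn.differentiableOn
      (.of_forall fun n => (hf n).2.1) isOpen_ball
  refine ⟨g, ⟨g.continuous.continuousOn, hdiff, fun z hz => ?_⟩, fun _ => rfl⟩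
  have hlim := (hunif.tendsto_at (conj_mem_closedBall hz)).star
  refine tendsto_nhds_unique (hunif.tendsto_at hz) (hlim.congr fun n => ?_)
  exact ((hf n).2.2 z hz).symm

instance : CompleteSpace realDiscAlgebra :=
  isClosed_realDiscAlgebra.completeSpace_coe

namespace IsRDisc

variable {f : ℂ → ℂ}

/-- The element of the real disc algebra given by `f`. -/
def toRealDiscAlgebra (hf : IsRDisc f) : realDiscAlgebra :=
  ⟨⟨(closedBall 0 1).domRestrict f, hf.1.domRestrict⟩, f, hf, fun _ => rfl⟩

lemma toRealDiscAlgebra_inj {g : ℂ → ℂ} {hf : IsRDisc f} {hg : IsRDisc g} :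
    hf.toRealDiscAlgebra = hg.toRealDiscAlgebra ↔ Set.EqOn f g (closedBall 0 1) := by
  rw [← Set.domRestrict_eq_domRestrict_iff, Subtype.ext_iff, ← DFunLike.coe_fn_eq]
  rfl

lemma exists_toRealDiscAlgebra_eq (F : realDiscAlgebra) :
    ∃ f, ∃ hf : IsRDisc f, hf.toRealDiscAlgebra = F := by
  obtain ⟨F, f, hf, hFf⟩ := F
  exact ⟨f, hf, Subtype.ext (ContinuousMap.ext fun z => (hFf z).symm)⟩

lemma isUnit_toRealDiscAlgebra_iff (hf : IsRDisc f) :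
    IsUnit hf.toRealDiscAlgebra ↔ ∀ z ∈ closedBall (0 : ℂ) 1, f z ≠ 0 := by
  rw [isUnit_iff_exists_inv]
  constructor
  · rintro ⟨G, hG⟩ z hz
    obtain ⟨g, hg, rfl⟩ := exists_toRealDiscAlgebra_eq G
    have hfg : f z * g z = ((1 : ℝ) : ℂ) :=
      toRealDiscAlgebra_inj (hf := hf.mul hg) (hg := .const 1).1 hG hz
    exact left_ne_zero_of_mul_eq_one (hfg.trans ofReal_one)
  · intro hne
    exact ⟨(hf.inv hne).toRealDiscAlgebra,
      toRealDiscAlgebra_inj (hf := hf.mul (hf.inv hne)) (hg := .const 1).2 fun z hz =>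
        (mul_inv_cancel₀ (hne z hz)).trans ofReal_one.symm⟩

lemma exists_sub_linear_mul_ne_zero (hf : IsRDisc f) {a : ℝ} (ha : a ∈ Set.Icc (-1 : ℝ) 1)
    (hfa : f a ≠ 0) :
    ∃ q, IsRDisc q ∧ ∀ z ∈ closedBall (0 : ℂ) 1, f z - (z - a) * q z ≠ 0 := by
  obtain ⟨p, hp⟩ := hf.exists_real_polynomial_near (half_pos (norm_pos_iff.2 hfa))
  obtain ⟨q, hq⟩ := Polynomial.X_sub_C_dvd_sub_C_eval (a := a) (p := p)
  refine ⟨_, .aeval q, fun z hz hzero => ?_⟩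
  have hfactor : Polynomial.aeval z p - Polynomial.aeval (a : ℂ) p =
      (z - a) * Polynomial.aeval z q := by
    simpa only [map_sub, map_mul, Polynomial.aeval_X, Polynomial.aeval_C,
      ← Polynomial.aeval_algebraMap_apply_eq_algebraMap_eval, coe_algebraMap]
      using congrArg (Polynomial.aeval z) hq
  have hfa_eq : f a = (f a - Polynomial.aeval (a : ℂ) p) - (f z - Polynomial.aeval z p) := by
    linear_combination hzero - hfactor
  refine lt_irrefl ‖f a‖ ?_
  calc ‖f a‖ ≤ ‖f a - Polynomial.aeval (a : ℂ) p‖ + ‖f z - Polynomial.aeval z p‖ := by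
        conv_lhs => rw [hfa_eq]
        exact norm_sub_le _ _
    _ < ‖f a‖ / 2 + ‖f a‖ / 2 := add_lt_add (hp a (ofReal_mem_closedBall ha)) (hp z hz)
    _ = ‖f a‖ := add_halves _

lemma isCoprime_id_sub_algebraMap (hf : IsRDisc f) {a : ℝ}
    (hfa : a ∈ Set.Icc (-1 : ℝ) 1 → f a ≠ 0) :
    IsCoprime (id.toRealDiscAlgebra - algebraMap ℝ realDiscAlgebra a) hf.toRealDiscAlgebra := by
  have hlin : IsRDisc (fun z => z - (a : ℂ)) := id.sub (.const a)
  change IsCoprime hlin.toRealDiscAlgebra _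
  by_cases ha : a ∈ Set.Icc (-1 : ℝ) 1
  · obtain ⟨q, hq, hne⟩ := hf.exists_sub_linear_mul_ne_zero ha (hfa ha)
    obtain ⟨u, hu⟩ := (hf.sub (hlin.mul hq)).isUnit_toRealDiscAlgebra_iff.2 hne
    have hdecomp : hf.toRealDiscAlgebra =
        u + hlin.toRealDiscAlgebra * hq.toRealDiscAlgebra := by
      rw [hu]
      exact (sub_add_cancel hf.toRealDiscAlgebra
        (hlin.toRealDiscAlgebra * hq.toRealDiscAlgebra)).symm
    rw [hdecomp, IsCoprime.add_mul_left_right_iff]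
    exact isCoprime_one_right.of_isCoprime_of_dvd_right u.isUnit.dvd
  · refine isCoprime_one_left.of_isCoprime_of_dvd_left
      (hlin.isUnit_toRealDiscAlgebra_iff.2 fun z hz hzero => ha ?_).dvd
    rw [sub_eq_zero.1 hzero, mem_closedBall_zero_iff, norm_real] at hz
    exact abs_le.1 hz

lemma isCoprime_affine (hf : IsRDisc f) (hne : ∀ x ∈ Set.Icc (-1 : ℝ) 1, f x ≠ 0) {b c : ℝ}
    (hbc : b ≠ 0 ∨ c ≠ 0) :
    IsCoprime
      (algebraMap ℝ realDiscAlgebra b + algebraMap ℝ realDiscAlgebra c * id.toRealDiscAlgebra)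
      hf.toRealDiscAlgebra := by
  by_cases hc : c = 0
  · have hb : IsUnit (algebraMap ℝ realDiscAlgebra b) :=
      (IsUnit.mk0 b (hbc.resolve_right (not_not.2 hc))).map _
    simpa only [hc, map_zero, zero_mul, add_zero] using
      isCoprime_one_left.of_isCoprime_of_dvd_left hb.dvd
  · have hfactor : algebraMap ℝ realDiscAlgebra b +
        algebraMap ℝ realDiscAlgebra c * id.toRealDiscAlgebra =
          algebraMap ℝ realDiscAlgebra c *
            (id.toRealDiscAlgebra - algebraMap ℝ realDiscAlgebra (-(b / c))) := by
      rw [map_neg, sub_neg_eq_add, mul_add, ← map_mul, mul_div_cancel₀ b hc, add_comm]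
    rw [hfactor, isCoprime_mul_unit_left_left ((IsUnit.mk0 c hc).map _)]
    exact hf.isCoprime_id_sub_algebraMap fun ha => hne _ ha

theorem neg_one_mem_expModSet (hf : IsRDisc f) (hne : ∀ x ∈ Set.Icc (-1 : ℝ) 1, f x ≠ 0) :
    -1 ∈ expModSet (Ideal.span {hf.toRealDiscAlgebra}) := by
  let halfTurn (θ : ℝ) : realDiscAlgebra :=
    algebraMap ℝ _ (Real.cos θ) + algebraMap ℝ _ (Real.sin θ) * id.toRealDiscAlgebra
  have hcont : Continuous halfTurn := by
    have := continuous_algebraMap ℝ realDiscAlgebra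
    fun_prop
  have hunit : ∀ F ∈ Set.range halfTurn,
      IsUnit (Ideal.Quotient.mk (Ideal.span {hf.toRealDiscAlgebra}) F) := by
    rintro _ ⟨θ, rfl⟩
    refine isUnit_mk_span_singleton_of_isCoprime (hf.isCoprime_affine hne ?_)
    by_contra! hzero
    simpa [hzero.1, hzero.2] using Real.sin_sq_add_cos_sq θ
  have hone : (1 : realDiscAlgebra) ∈ expModSet (Ideal.span {hf.toRealDiscAlgebra}) :=
    ⟨0, by rw [NormedSpace.exp_zero]⟩
  have hpath := subset_expModSet_of_isPreconnected (isPreconnected_range hcont) hunit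
    ⟨1, ⟨0, by simp [halfTurn]⟩, hone⟩
  exact hpath ⟨Real.pi, by simp [halfTurn]⟩

end IsRDisc

theorem swap_simultaneously_stabilizable (f g : ℂ → ℂ)
    (hf : IsRDisc f) (hg : IsRDisc g) (hinv : BezoutPair f g)
    (havoid : ∀ x ∈ Set.Icc (-1 : ℝ) 1, f (x : ℂ) ≠ g (x : ℂ)) :
    ∃ α β : ℂ → ℂ, IsRDisc α ∧ IsRDisc β ∧
      IsRDiscUnit (fun z => α z * f z + β z * g z) ∧
      IsRDiscUnit (fun z => α z * g z + β z * f z) := by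
  obtain ⟨a, b, ha, hb, hab⟩ := hinv
  have hcop : IsCoprime hf.toRealDiscAlgebra hg.toRealDiscAlgebra :=
    ⟨ha.toRealDiscAlgebra, hb.toRealDiscAlgebra,
      IsRDisc.toRealDiscAlgebra_inj (hf := (ha.mul hf).add (hb.mul hg)) (hg := .const 1).2
        fun z hz => (hab z hz).trans ofReal_one.symm⟩
  have hexp : -1 ∈ expModSet (Ideal.span {hf.toRealDiscAlgebra - hg.toRealDiscAlgebra}) :=
    (hf.sub hg).neg_one_mem_expModSet fun x hx => sub_ne_zero.2 (havoid x hx)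
  obtain ⟨α, β, hone, hunit_swap⟩ :=
    exists_isUnit_swap_of_neg_one_mem_expModSet hcop hexp
  have hunit : IsUnit (α * hf.toRealDiscAlgebra + β * hg.toRealDiscAlgebra) := hone ▸ isUnit_one
  obtain ⟨α, hα, rfl⟩ := IsRDisc.exists_toRealDiscAlgebra_eq α
  obtain ⟨β, hβ, rfl⟩ := IsRDisc.exists_toRealDiscAlgebra_eq β
  have hαfβg := (hα.mul hf).add (hβ.mul hg)
  have hαgβf := (hα.mul hg).add (hβ.mul hf)
  exact ⟨α, β, hα, hβ, ⟨hαfβg, hαfβg.isUnit_toRealDiscAlgebra_iff.1 hunit⟩,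
    ⟨hαgβf, hαgβf.isUnit_toRealDiscAlgebra_iff.1 hunit_swap⟩⟩
end
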